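/- Taylor coefficient bound for the logarithmic part of the Bessel resolvent kernel, integer order (Lemma 7.1 b, first bound): Let n ∈ ℕ and 0 < x ≤ y. Let J_n(z) := (z/2)^n ∑_{k=0}^∞ (−1)^k z^{2k}/(4^k · k! · (k+n)!) be the Bessel function of integer order n, and consider the even entire function g₁(λ) := √(xy) · J_n(λx) · J_n(λy). Let β_{2k} denote the Taylor coefficient of λ^{2k} of g₁ at λ = 0 (so β_{2k} = 0 for k < n). Then for every R > 0 and every k ∈ ℕ₀: |β_{2k}| ≤ R^{−2k} · (xy)^{n+1/2} · (R/2)^{2n} · e^{R(x+y)} / (n!)². -/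

import Mathlib

noncomputable section

lemma bessel_aux_four (k : ℕ) : (2 * k).factorial ≤ 4 ^ k * k.factorial * k.factorial := by
  have h := Nat.choose_mul_factorial_mul_factorial (show k ≤ 2 * k by omega)
  rw [show 2 * k - k = k by omega] at h
  rw [← h]
  gcongr
  calc (2 * k).choose k ≤ 2 ^ (2 * k) := Nat.choose_le_two_pow _ _
    _ = 4 ^ k := by rw [pow_mul]; norm_num

lemma bessel_aux_h (n : ℕ) (z : ℂ) :
    ‖∑' k : ℕ, ((-1 : ℂ) ^ k * z ^ (2 * k)) /
        ((4 : ℂ) ^ k * (Nat.factorial k : ℂ) * (Nat.factorial (k + n) : ℂ))‖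
      ≤ Real.exp ‖z‖ / (n.factorial : ℝ) := by
  have hs := (Real.hasSum_cosh ‖z‖).div_const (n.factorial : ℝ)
  refine (tsum_of_norm_bounded hs ?_).trans ?_
  · intro k
    simp only [norm_div, norm_mul, norm_pow, norm_neg, norm_one, one_pow, one_mul,
      Complex.norm_natCast, Complex.norm_ofNat]
    rw [div_div]
    refine div_le_div_of_nonneg_left (by positivity) (by positivity) ?_
    have h1 := bessel_aux_four k
    have h2 : k.factorial * n.factorial ≤ (k + n).factorial :=
      Nat.le_of_dvd (Nat.factorial_pos _) (Nat.factorial_mul_factorial_dvd_factorial_add k n)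
    have h3 : (2 * k).factorial * n.factorial ≤ 4 ^ k * k.factorial * (k + n).factorial := by
      calc (2 * k).factorial * n.factorial
          ≤ (4 ^ k * k.factorial * k.factorial) * n.factorial := by gcongr
        _ = 4 ^ k * k.factorial * (k.factorial * n.factorial) := by ring
        _ ≤ _ := by gcongr
    exact_mod_cast h3
  · gcongr
    rw [Real.cosh_eq]
    have : Real.exp (-‖z‖) ≤ Real.exp ‖z‖ :=
      Real.exp_le_exp.2 (by linarith [norm_nonneg z])
    linarith

lemma bessel_aux_cauchy (β : ℕ → ℂ) (F : ℂ → ℂ)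
    (hF : ∀ w : ℂ, HasSum (fun k : ℕ => β k * w ^ k) (F w)) (r C : ℝ) (hr : 0 < r)
    (hC : ∀ w : ℂ, ‖w‖ = r → ‖F w‖ ≤ C) (k : ℕ) : ‖β k‖ ≤ C / r ^ k := by
  have hp : HasFPowerSeriesOnBall F (FormalMultilinearSeries.ofScalars ℂ β) 0 ⊤ := by
    refine ⟨?_, by simp, ?_⟩
    · rw [FormalMultilinearSeries.radius_eq_top_of_summable_norm]
      intro t
      have := (hF (t : ℝ)).summable.norm
      simpa [FormalMultilinearSeries.ofScalars_norm] using this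
    · intro y _
      simpa [FormalMultilinearSeries.ofScalars_apply_eq, mul_comm] using hF y
  have hd : Differentiable ℂ F := fun w => by
    have := hp.analyticOnNhd w (by simp)
    exact this.differentiableAt
  have h1 := Complex.norm_iteratedDeriv_le_of_forall_mem_sphere_norm_le (c := 0) k hr
    hd.diffContOnCl (C := C) (fun z hz => hC z (by simpa using hz))
  have h2 := hp.factorial_smul (1 : ℂ) k
  rw [← iteratedDeriv_eq_iteratedFDeriv] at h2
  rw [← h2] at h1
  have hk : (0 : ℝ) < k.factorial := by exact_mod_cast k.factorial_pos
  simp only [FormalMultilinearSeries.ofScalars_apply_eq, one_pow, nsmul_eq_mul, smul_eq_mul,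
    mul_one, norm_mul, Complex.norm_natCast, mul_div_assoc] at h1
  exact le_of_mul_le_mul_left h1 hk

/-- Taylor coefficient bound for the logarithmic part of the Bessel resolvent kernel,
integer order (Lemma 7.1 b, first bound). -/
theorem bessel_log_part_coefficient_bound
    (n : ℕ) (hn : 0 < n)
    (x y : ℝ) (hx : 0 < x) (hxy : x ≤ y)
    (Jn : ℂ → ℂ)
    (hJn : ∀ z : ℂ, Jn z = (z / 2) ^ n *
      ∑' k : ℕ, ((-1 : ℂ) ^ k * z ^ (2 * k)) /
        ((4 : ℂ) ^ k * (Nat.factorial k : ℂ) * (Nat.factorial (k + n) : ℂ)))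
    (g₁ : ℂ → ℂ)
    (hg₁ : ∀ lam : ℂ, g₁ lam =
      ((Real.sqrt (x * y) : ℝ) : ℂ) * Jn (lam * x) * Jn (lam * y))
    (β : ℕ → ℂ)
    (hβ : ∀ lam : ℂ, HasSum (fun k : ℕ => β k * lam ^ (2 * k)) (g₁ lam)) :
    ∀ R : ℝ, 0 < R → ∀ k : ℕ,
      ‖β k‖ ≤ (R ^ (2 * k))⁻¹ * (x * y) ^ ((n : ℝ) + 1 / 2) * (R / 2) ^ (2 * n) *
        Real.exp (R * (x + y)) / ((Nat.factorial n : ℝ)) ^ 2 := by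
  intro R hR k
  have hy : 0 < y := hx.trans_le hxy
  have hJ : ∀ z : ℂ, ‖Jn z‖ ≤ (‖z‖ / 2) ^ n * (Real.exp ‖z‖ / (n.factorial : ℝ)) := by
    intro z
    rw [hJn, norm_mul, norm_pow, norm_div, Complex.norm_ofNat]
    gcongr
    exact bessel_aux_h n z
  have hsq : ∀ w : ℂ, (w ^ ((2 : ℂ)⁻¹)) ^ 2 = w := fun w => Complex.cpow_ofNat_inv_pow w 2
  have key := bessel_aux_cauchy β (fun w => g₁ (w ^ ((2 : ℂ)⁻¹))) (fun w => by
      simpa only [pow_mul, hsq] using hβ (w ^ ((2 : ℂ)⁻¹))) (R ^ 2)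
    (Real.sqrt (x * y) * ((R * x / 2) ^ n * (Real.exp (R * x) / (n.factorial : ℝ))) *
      ((R * y / 2) ^ n * (Real.exp (R * y) / (n.factorial : ℝ)))) (by positivity) (by
      intro w hw
      have hl : ‖w ^ ((2 : ℂ)⁻¹)‖ = R := by
        have := congrArg norm (hsq w)
        rw [norm_pow, hw] at this
        exact (pow_left_inj₀ (norm_nonneg _) hR.le two_ne_zero).1 this
      have h1 := hJ (w ^ ((2 : ℂ)⁻¹) * x)
      have h2 := hJ (w ^ ((2 : ℂ)⁻¹) * y)
      rw [norm_mul, hl, Complex.norm_of_nonneg hx.le] at h1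
      rw [norm_mul, hl, Complex.norm_of_nonneg hy.le] at h2
      simp only [hg₁]
      rw [norm_mul, norm_mul, Complex.norm_of_nonneg (Real.sqrt_nonneg _)]
      gcongr) k
  refine key.trans (le_of_eq ?_)
  have hxy0 : 0 < x * y := mul_pos hx hy
  rw [Real.rpow_add hxy0, Real.rpow_natCast, ← Real.sqrt_eq_rpow, mul_add, Real.exp_add, ← pow_mul]
  have hn0 : (n.factorial : ℝ) ≠ 0 := by exact_mod_cast n.factorial_ne_zero
  rw [pow_mul (R / 2) 2 n]
  have e : (R * x / 2) ^ n * (R * y / 2) ^ n = (x * y) ^ n * ((R / 2) ^ 2) ^ n := by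
    rw [← mul_pow, ← mul_pow]; congr 1; ring
  calc _ = ((R * x / 2) ^ n * (R * y / 2) ^ n) * (Real.sqrt (x * y) * Real.exp (R * x) *
        Real.exp (R * y) / (n.factorial : ℝ) ^ 2 * (R ^ (2 * k))⁻¹) := by
        field_simp
    _ = _ := by rw [e]; field_simp
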